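/- arXiv:2303.07916 — 7 statements merged into one kernel-verified Lean document; each statement's English description precedes it below -/
import Mathlib

section
/- Let (ḡ_k)_{0≤k≤N} be the backward quadratic flow with final value g_f. If C₊·g_f ≤ 1, then the sequence is well defined with 0 < ḡ_0 < ḡ_1 < ⋯ < ḡ_N = g_f, and for every 0 ≤ k ≤ N one has g_f/(1 + C₊·g_f·(N−k)) ≤ ḡ_k ≤ g_f/(1 + (1/2)·C₋·g_f·(N−k)). -/
noncomputable section

/-- The backward quadratic flow: `g N = gf` and, for `k < N`,
`g k` is the unique positive root of `β k * t ^ 2 + t - g (k + 1) = 0`. -/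
def QuadFlow (β : ℕ → ℝ) (N : ℕ) (gf : ℝ) (g : ℕ → ℝ) : Prop :=
  g N = gf ∧ ∀ k, k < N → g k = (-1 + Real.sqrt (1 + 4 * β k * g (k + 1))) / (2 * β k)

theorem quad_step (b y : ℝ) (hb : 0 < b) (hy : 0 < y) :
    ∃ t, t = (-1 + Real.sqrt (1 + 4 * b * y)) / (2 * b) ∧ 0 < t ∧ b * t ^ 2 + t = y ∧ t < y := by
  have hby : 0 < b * y := mul_pos hb hy
  have hs : Real.sqrt (1 + 4 * b * y) ^ 2 = 1 + 4 * b * y := Real.sq_sqrt (by nlinarith)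
  have hs1 : 1 < Real.sqrt (1 + 4 * b * y) := by
    apply Real.lt_sqrt_of_sq_lt
    nlinarith
  generalize Real.sqrt (1 + 4 * b * y) = s at hs hs1
  have ht : 0 < (-1 + s) / (2 * b) := div_pos (by linarith) (by linarith)
  have he : b * ((-1 + s) / (2 * b)) ^ 2 + (-1 + s) / (2 * b) = y := by
    field_simp
    nlinarith
  refine ⟨_, rfl, ht, he, ?_⟩
  have : 0 < b * ((-1 + s) / (2 * b)) ^ 2 := by positivity
  linarith

theorem quad_inv (b t y : ℝ) (hb : 0 < b) (ht : 0 < t) (he : b * t ^ 2 + t = y) :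
    t⁻¹ = y⁻¹ + b / (1 + b * t) := by
  have h1 : 0 < 1 + b * t := by positivity
  have : y = t * (1 + b * t) := by rw [← he]; ring
  rw [this]
  field_simp

/-- The flow indexed by the number of backward steps. -/
def backFlow (β : ℕ → ℝ) (N : ℕ) (gf : ℝ) : ℕ → ℝ
  | 0 => gf
  | m + 1 => (-1 + Real.sqrt (1 + 4 * β (N - (m + 1)) * backFlow β N gf m)) /
      (2 * β (N - (m + 1)))

theorem backFlow_bounds (Cm Cp : ℝ) (hCm : 0 < Cm)
    (N : ℕ) (β : ℕ → ℝ) (hβ : ∀ k, k < N → Cm ≤ β k ∧ β k ≤ Cp)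
    (gf : ℝ) (hgf : 0 < gf) (hsmall : Cp * gf ≤ 1) (m : ℕ) (hm : m ≤ N) :
    0 < backFlow β N gf m ∧ backFlow β N gf m ≤ gf ∧
      gf⁻¹ + Cm / 2 * m ≤ (backFlow β N gf m)⁻¹ ∧ (backFlow β N gf m)⁻¹ ≤ gf⁻¹ + Cp * m := by
  induction m with
  | zero => simp [backFlow, hgf]
  | succ m ih =>
    obtain ⟨h0, h1, h2, h3⟩ := ih (by omega)
    obtain ⟨hb1, hb2⟩ := hβ (N - (m + 1)) (by omega)
    have hb : 0 < β (N - (m + 1)) := by linarith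
    obtain ⟨t, ht, htp, he, hlt⟩ := quad_step _ _ hb h0
    have hi := quad_inv _ _ _ hb htp he
    have hB : backFlow β N gf (m + 1) = t := by rw [ht, backFlow]
    rw [hB]
    generalize β (N - (m + 1)) = b at *
    have hbt : b * t ≤ 1 := by
      calc b * t ≤ Cp * gf := by
            apply mul_le_mul hb2 (by linarith) htp.le (by linarith)
        _ ≤ 1 := hsmall
    have hbtp : 0 < b * t := mul_pos hb htp
    have hu : b / (1 + b * t) ≤ Cp := by
      rw [div_le_iff₀ (by linarith)]
      nlinarith
    have hl : Cm / 2 ≤ b / (1 + b * t) := by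
      rw [le_div_iff₀ (by linarith)]
      nlinarith
    push_cast
    refine ⟨htp, by linarith, by linarith, by linarith⟩

theorem stmt_0 (Cm Cp : ℝ) (hCm : 0 < Cm) (hCmCp : Cm ≤ Cp)
    (N : ℕ) (hN : 1 ≤ N) (β : ℕ → ℝ) (hβ : ∀ k, k < N → Cm ≤ β k ∧ β k ≤ Cp)
    (gf : ℝ) (hgf : 0 < gf) (hsmall : Cp * gf ≤ 1) :
    ∃ g : ℕ → ℝ, QuadFlow β N gf g ∧
      (∀ k, k ≤ N → 0 < g k) ∧
      (∀ k, k < N → g k < g (k + 1)) ∧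
      (∀ k, k ≤ N →
        gf / (1 + Cp * gf * ((N - k : ℕ) : ℝ)) ≤ g k ∧
        g k ≤ gf / (1 + (1 / 2) * Cm * gf * ((N - k : ℕ) : ℝ))) := by
  have hb := backFlow_bounds Cm Cp hCm N β hβ gf hgf hsmall
  have hs : ∀ k, k < N → N - k = (N - (k + 1)) + 1 ∧ N - ((N - (k + 1)) + 1) = k := by
    intro k hk; omega
  have hrec : ∀ k, k < N → backFlow β N gf (N - k) =
      (-1 + Real.sqrt (1 + 4 * β k * backFlow β N gf (N - (k + 1)))) / (2 * β k) := by
    intro k hk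
    obtain ⟨h1, h2⟩ := hs k hk
    rw [h1, backFlow, h2]
  refine ⟨fun k => backFlow β N gf (N - k), ⟨by simp [backFlow], hrec⟩, ?_, ?_, ?_⟩
  · intro k _
    exact (hb (N - k) (by omega)).1
  · intro k hk
    have h0 := (hb (N - (k + 1)) (by omega)).1
    obtain ⟨t, ht, -, -, hlt⟩ := quad_step (β k) _ (by linarith [(hβ k hk).1]) h0
    show backFlow β N gf (N - k) < backFlow β N gf (N - (k + 1))
    rw [hrec k hk, ← ht]
    exact hlt
  · intro k _
    obtain ⟨h0, -, h2, h3⟩ := hb (N - k) (by omega)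
    show _ ≤ backFlow β N gf (N - k) ∧ backFlow β N gf (N - k) ≤ _
    generalize backFlow β N gf (N - k) = x at *
    have hn : (0 : ℝ) ≤ ((N - k : ℕ) : ℝ) := Nat.cast_nonneg _
    generalize ((N - k : ℕ) : ℝ) = n at *
    have hCp : 0 < Cp := by linarith
    have e1 : gf / (1 + Cp * gf * n) = (gf⁻¹ + Cp * n)⁻¹ := by
      field_simp
    have e2 : gf / (1 + 1 / 2 * Cm * gf * n) = (gf⁻¹ + Cm / 2 * n)⁻¹ := by
      field_simp
    rw [e1, e2]
    exact ⟨inv_le_of_inv_le₀ h0 h3, le_inv_of_le_inv₀ (by positivity) h2⟩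
end
end

section
/- There exist g₀ > 0 and K > 0, depending only on C₋, C₊, C_θ, such that if 0 < g_f ≤ g₀ then the field-strength flow satisfies |z̄_k| ≤ K·ḡ_k for all 0 ≤ k ≤ N. -/
noncomputable section

theorem stmt_1 (Cm Cp Cθ : ℝ) (hCm : 0 < Cm) (hCmCp : Cm ≤ Cp) (hCθ : 0 < Cθ) :
    ∃ g0 : ℝ, 0 < g0 ∧ ∃ K : ℝ, 0 < K ∧
      ∀ (N : ℕ), 1 ≤ N → ∀ β : ℕ → ℝ, (∀ k, k < N → Cm ≤ β k ∧ β k ≤ Cp) →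
      ∀ θ : ℕ → ℝ, (∀ k, k < N → |θ k| ≤ Cθ) →
      ∀ gf : ℝ, 0 < gf → gf ≤ g0 →
      ∀ g : ℕ → ℝ, QuadFlow β N gf g →
      ∀ z : ℕ → ℝ, z 0 = 0 → (∀ k, k < N → z (k + 1) = z k + θ k * g k ^ 2) →
      ∀ k, k ≤ N → |z k| ≤ K * g k := by
  refine ⟨1, one_pos, Cθ / Cm, div_pos hCθ hCm, ?_⟩
  intro N _ β hβ θ hθ gf hgf _ g hg z hz0 hz
  obtain ⟨hgN, hrec⟩ := hg
  have hpos : ∀ j, j ≤ N → 0 < g (N - j) := by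
    intro j
    induction j with
    | zero => intro _; simpa [hgN] using hgf
    | succ j ih =>
      intro hj
      have h1 := ih (by omega)
      have hk : N - (j + 1) < N := by omega
      have he : N - (j + 1) + 1 = N - j := by omega
      have hb : 0 < β (N - (j + 1)) := lt_of_lt_of_le hCm (hβ _ hk).1
      rw [hrec _ hk, he]
      have hs : 1 < Real.sqrt (1 + 4 * β (N - (j + 1)) * g (N - j)) := by
        rw [Real.lt_sqrt (by norm_num)]
        have : 0 < 4 * β (N - (j + 1)) * g (N - j) := by positivity
        linarith
      exact div_pos (by linarith) (by linarith)
  have hpos' : ∀ k, k ≤ N → 0 < g k := by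
    intro k hk
    have := hpos (N - k) (by omega)
    rwa [Nat.sub_sub_self hk] at this
  have hquad : ∀ k, k < N → g (k + 1) = g k + β k * g k ^ 2 := by
    intro k hk
    have hb : 0 < β k := lt_of_lt_of_le hCm (hβ _ hk).1
    have h1 := hpos' (k + 1) hk
    have h2 : 0 ≤ 1 + 4 * β k * g (k + 1) := by positivity
    have h3 := Real.sq_sqrt h2
    have h4 : Real.sqrt (1 + 4 * β k * g (k + 1)) = 2 * β k * g k + 1 := by
      rw [hrec k hk]
      field_simp
      ring
    rw [h4] at h3
    have h5 : (4 * β k) * g (k + 1) = (4 * β k) * (g k + β k * g k ^ 2) := by linarith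
    exact mul_left_cancel₀ (by positivity) h5
  intro k
  induction k with
  | zero =>
    intro hk
    rw [hz0, abs_zero]
    exact mul_nonneg (div_pos hCθ hCm).le (hpos' 0 hk).le
  | succ k ih =>
    intro hk
    have h1 := ih (by omega)
    have hb := (hβ k hk).1
    have hC : Cθ = Cθ / Cm * Cm := by field_simp
    have h2 : |θ k * g k ^ 2| ≤ Cθ / Cm * (β k * g k ^ 2) := by
      rw [abs_mul, abs_of_nonneg (sq_nonneg (g k)), ← mul_assoc]
      apply mul_le_mul_of_nonneg_right _ (sq_nonneg _)
      calc |θ k| ≤ Cθ := hθ k hk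
        _ = Cθ / Cm * Cm := hC
        _ ≤ Cθ / Cm * β k := mul_le_mul_of_nonneg_left hb (div_pos hCθ hCm).le
    rw [hz k hk, hquad k hk, mul_add]
    exact (abs_add_le _ _).trans (add_le_add h1 h2)
end
end

section
/- There exist g₀ > 0 and K > 0, depending only on C₋ and C₊, such that if 0 < g_f ≤ g₀ then for all 0 ≤ j ≤ k ≤ N−1, Σ_{ℓ=j}^{k} β_ℓ·ḡ_ℓ ≤ K·|log ḡ_j|. -/
noncomputable section

theorem quad_root {b y t : ℝ} (hb : 0 < b) (hy : 0 < y)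
    (ht : t = (-1 + Real.sqrt (1 + 4 * b * y)) / (2 * b)) :
    0 < t ∧ y = t * (1 + b * t) := by
  have h1 : 0 ≤ 1 + 4 * b * y := by positivity
  have h2 : 1 < Real.sqrt (1 + 4 * b * y) := by
    apply Real.lt_sqrt_of_sq_lt
    have := mul_pos hb hy
    linarith
  have h3 := Real.sq_sqrt h1
  refine ⟨?_, ?_⟩
  · rw [ht]
    apply div_pos <;> linarith
  · have h4 : Real.sqrt (1 + 4 * b * y) = 2 * b * t + 1 := by
      rw [ht]
      field_simp
      ring
    rw [h4] at h3
    have h5 : b * (y - t * (1 + b * t)) = 0 := by linarith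
    rcases mul_eq_zero.mp h5 with h | h <;> linarith

theorem stmt_2 (Cm Cp : ℝ) (hCm : 0 < Cm) (hCmCp : Cm ≤ Cp) :
    ∃ g0 : ℝ, 0 < g0 ∧ ∃ K : ℝ, 0 < K ∧
      ∀ (N : ℕ), 1 ≤ N → ∀ β : ℕ → ℝ, (∀ k, k < N → Cm ≤ β k ∧ β k ≤ Cp) →
      ∀ gf : ℝ, 0 < gf → gf ≤ g0 →
      ∀ g : ℕ → ℝ, QuadFlow β N gf g →
      ∀ j k : ℕ, j ≤ k → k < N →
        ∑ l ∈ Finset.Icc j k, β l * g l ≤ K * |Real.log (g j)| := by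
  have hCp : 0 < Cp := lt_of_lt_of_le hCm hCmCp
  refine ⟨min 1 (1 / Cp), by positivity, 2, by norm_num, ?_⟩
  intro N _ β hβ gf hgf hgf0 g hg j k hjk hkN
  obtain ⟨hgN, hrec⟩ := hg
  have hb : ∀ l, l < N → 0 < β l := fun l hl => lt_of_lt_of_le hCm (hβ l hl).1
  have hbd : ∀ d, d ≤ N → 0 < g (N - d) ∧ g (N - d) ≤ min 1 (1 / Cp) := by
    intro d
    induction d with
    | zero => intro _; simp only [Nat.sub_zero, hgN]; exact ⟨hgf, hgf0⟩
    | succ d ih =>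
      intro hd
      obtain ⟨i1, i2⟩ := ih (by omega)
      have e : N - d = N - (d + 1) + 1 := by omega
      rw [e] at i1 i2
      have hl : N - (d + 1) < N := by omega
      obtain ⟨p, q⟩ := quad_root (hb _ hl) i1 (hrec _ hl)
      refine ⟨p, le_trans ?_ i2⟩
      rw [q]
      have := mul_pos p (mul_pos (hb _ hl) p)
      linarith
  have hbd' : ∀ l, l ≤ N → 0 < g l ∧ g l ≤ min 1 (1 / Cp) := by
    intro l hl
    have h := hbd (N - l) (by omega)
    rwa [show N - (N - l) = l by omega] at h
  have step : ∀ l, l < N → β l * g l ≤ 2 * (Real.log (g (l + 1)) - Real.log (g l)) := by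
    intro l hl
    obtain ⟨p, q⟩ := quad_root (hb _ hl) (hbd' (l + 1) (by omega)).1 (hrec _ hl)
    have hx : 0 < β l * g l := mul_pos (hb _ hl) p
    have hx1 : β l * g l ≤ 1 := by
      calc β l * g l ≤ Cp * (1 / Cp) :=
            mul_le_mul (hβ l hl).2 ((hbd' l hl.le).2.trans (min_le_right _ _)) p.le hCp.le
        _ = 1 := by field_simp
    rw [q, Real.log_mul p.ne' (by positivity)]
    have h := Real.one_sub_inv_le_log_of_pos (show 0 < 1 + β l * g l by positivity)
    have h2 : β l * g l / 2 ≤ 1 - (1 + β l * g l)⁻¹ := by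
      have e : 1 - (1 + β l * g l)⁻¹ = β l * g l / (1 + β l * g l) := by
        field_simp
        ring
      rw [e]
      exact div_le_div_of_nonneg_left hx.le (by positivity) (by linarith)
    linarith
  have key : ∑ l ∈ Finset.Icc j k, β l * g l ≤ 2 * (Real.log (g (k + 1)) - Real.log (g j)) := by
    induction k, hjk using Nat.le_induction with
    | base => simpa using step j hkN
    | succ m hm ih =>
      rw [Finset.sum_Icc_succ_top (by omega)]
      have h1 := ih (by omega)
      have h2 := step (m + 1) hkN
      linarith
  have hk := hbd' (k + 1) (by omega)
  have hlog : Real.log (g (k + 1)) ≤ 0 :=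
    Real.log_nonpos hk.1.le (hk.2.trans (min_le_left _ _))
  have := neg_le_abs (Real.log (g j))
  linarith
end
end

section
/- For every real n > 1 and real m ≥ 0 there exist g₀ > 0 and K > 0, depending only on n, m, C₋, C₊, such that if 0 < g_f ≤ g₀ then for all 0 ≤ j ≤ k ≤ N−1, Σ_{ℓ=j}^{k} β_ℓ·ḡ_ℓ^n·|log ḡ_ℓ|^m ≤ K·ḡ_{k+1}^{n−1}·|log ḡ_{k+1}|^m. -/
noncomputable section

lemma aux_mono (a m x y : ℝ) (ha : 0 < a) (hm : 0 ≤ m) (hx : 0 < x) (hxy : x ≤ y)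
    (hy : y ≤ Real.exp (-(m / a) - 1)) :
    x ^ a * |Real.log x| ^ m ≤ y ^ a * |Real.log y| ^ m := by
  have hy0 : 0 < y := lt_of_lt_of_le hx hxy
  have hly : Real.log y ≤ -(m / a) - 1 := by
    rw [Real.log_le_iff_le_exp hy0]; exact hy
  have hlx : Real.log x ≤ Real.log y := Real.log_le_log hx hxy
  have hma : 0 ≤ m / a := by positivity
  rw [abs_of_neg (by linarith), abs_of_neg (by linarith)]
  have hv : 0 < -Real.log y := by linarith
  have hu : 0 < -Real.log x := by linarith
  rw [Real.rpow_def_of_pos hx, Real.rpow_def_of_pos hy0, Real.rpow_def_of_pos hv,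
    Real.rpow_def_of_pos hu, ← Real.exp_add, ← Real.exp_add, Real.exp_le_exp]
  have key : Real.log (-Real.log x) - Real.log (-Real.log y)
      ≤ (-Real.log x) / (-Real.log y) - 1 := by
    rw [← Real.log_div hu.ne' (by linarith)]
    exact Real.log_le_sub_one_of_pos (div_pos hu (by linarith))
  have hmv : m ≤ a * (-Real.log y) := by
    have : m / a ≤ -Real.log y := by linarith
    rw [div_le_iff₀ ha] at this
    linarith
  have h2 : m * ((-Real.log x) / (-Real.log y) - 1) ≤ a * (Real.log y - Real.log x) := by
    have e : (-Real.log x) / (-Real.log y) - 1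
        = (Real.log y - Real.log x) / (-Real.log y) := by
      have : Real.log y ≠ 0 := by linarith
      field_simp
      ring
    rw [e, ← mul_div_assoc, div_le_iff₀ (by linarith)]
    nlinarith [mul_le_mul_of_nonneg_right hmv (sub_nonneg.2 hlx)]
  nlinarith [mul_le_mul_of_nonneg_left key hm]

lemma aux_step (a m b x : ℝ) (ha : 0 < a) (hm : 0 ≤ m) (hx : 0 < x) (hb : 0 < b)
    (hbx : b * x ≤ 1) (hy : x + b * x ^ 2 ≤ Real.exp (-(m / a) - 1)) :
    b * x ^ (2 * a + 1) * |Real.log x| ^ m + 2 / a * (x ^ (2 * a) * |Real.log x| ^ m)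
      ≤ 2 / a * ((x + b * x ^ 2) ^ (2 * a) * |Real.log (x + b * x ^ 2)| ^ m) := by
  have hmono := aux_mono a m x (x + b * x ^ 2) ha hm hx (by nlinarith [sq_nonneg x]) hy
  have hbx0 : 0 < b * x := by positivity
  have hy0 : 0 < x + b * x ^ 2 := by positivity
  have hpow : x ^ a * (1 + a / 2 * (b * x)) ≤ (x + b * x ^ 2) ^ a := by
    have e : x + b * x ^ 2 = x * (1 + b * x) := by ring
    rw [e, Real.mul_rpow hx.le (by positivity)]
    refine mul_le_mul_of_nonneg_left ?_ (by positivity)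
    rw [Real.rpow_def_of_pos (by positivity)]
    have h1 := Real.add_one_le_exp (Real.log (1 + b * x) * a)
    have h2 := Real.one_sub_inv_le_log_of_pos (show 0 < 1 + b * x by positivity)
    have h3 : b * x / 2 ≤ 1 - (1 + b * x)⁻¹ := by
      have e2 : 1 - (1 + b * x)⁻¹ = b * x / (1 + b * x) := by
        have : (1 + b * x) ≠ 0 := by positivity
        field_simp
        ring
      rw [e2]
      exact div_le_div_of_nonneg_left hbx0.le (by positivity) (by linarith)
    nlinarith
  have ex : x ^ (2 * a) = x ^ a * x ^ a := by
    rw [← Real.rpow_add hx]; ring_nf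
  have ey : (x + b * x ^ 2) ^ (2 * a) = (x + b * x ^ 2) ^ a * (x + b * x ^ 2) ^ a := by
    rw [← Real.rpow_add hy0]; ring_nf
  rw [Real.rpow_add hx, Real.rpow_one, ex, ey]
  have hL : 0 ≤ |Real.log x| ^ m := by positivity
  have hX : 0 < x ^ a := by positivity
  have hY : 0 < (x + b * x ^ 2) ^ a := by positivity
  generalize |Real.log (x + b * x ^ 2)| ^ m = M at *
  generalize |Real.log x| ^ m = L at *
  generalize (x + b * x ^ 2) ^ a = Y at *
  generalize x ^ a = X at *
  have f1 : (X * (1 + a / 2 * (b * x))) * (X * L) ≤ Y * (Y * M) :=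
    mul_le_mul hpow hmono (by positivity) hY.le
  calc b * (X * X * x) * L + 2 / a * (X * X * L)
      = 2 / a * ((X * (1 + a / 2 * (b * x))) * (X * L)) := by field_simp; ring
    _ ≤ 2 / a * (Y * (Y * M)) := mul_le_mul_of_nonneg_left f1 (by positivity)
    _ = _ := by ring

lemma aux_root (b y : ℝ) (hb : 0 < b) (hy : 0 < y) :
    0 < (-1 + Real.sqrt (1 + 4 * b * y)) / (2 * b) ∧
    y = (-1 + Real.sqrt (1 + 4 * b * y)) / (2 * b)
      + b * ((-1 + Real.sqrt (1 + 4 * b * y)) / (2 * b)) ^ 2 := by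
  have hby : 0 < b * y := by positivity
  have hs := Real.sq_sqrt (show 0 ≤ 1 + 4 * b * y by nlinarith)
  have h1 : 1 < Real.sqrt (1 + 4 * b * y) := by
    rw [Real.lt_sqrt (by norm_num)]; nlinarith
  generalize Real.sqrt (1 + 4 * b * y) = s at *
  refine ⟨div_pos (by linarith) (by linarith), ?_⟩
  field_simp
  nlinarith

theorem stmt_3 (Cm Cp : ℝ) (hCm : 0 < Cm) (hCmCp : Cm ≤ Cp)
    (n m : ℝ) (hn : 1 < n) (hm : 0 ≤ m) :
    ∃ g0 : ℝ, 0 < g0 ∧ ∃ K : ℝ, 0 < K ∧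
      ∀ (N : ℕ), 1 ≤ N → ∀ β : ℕ → ℝ, (∀ k, k < N → Cm ≤ β k ∧ β k ≤ Cp) →
      ∀ gf : ℝ, 0 < gf → gf ≤ g0 →
      ∀ g : ℕ → ℝ, QuadFlow β N gf g →
      ∀ j k : ℕ, j ≤ k → k < N →
        ∑ l ∈ Finset.Icc j k, β l * g l ^ n * |Real.log (g l)| ^ m ≤
          K * g (k + 1) ^ (n - 1) * |Real.log (g (k + 1))| ^ m := by
  set a := (n - 1) / 2 with ha_def
  have ha : 0 < a := by rw [ha_def]; linarith
  have hCp : 0 < Cp := lt_of_lt_of_le hCm hCmCp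
  refine ⟨min (1 / Cp) (Real.exp (-(m / a) - 1)), by positivity, 2 / a, by positivity, ?_⟩
  intro N _ β hβ gf hgf hgf0 g hg j k hjk hkN
  obtain ⟨hgN, hrec⟩ := hg
  have hbd : ∀ i, i ≤ N → 0 < g (N - i) ∧
      g (N - i) ≤ min (1 / Cp) (Real.exp (-(m / a) - 1)) := by
    intro i
    induction i with
    | zero => intro _; simp only [Nat.sub_zero, hgN]; exact ⟨hgf, hgf0⟩
    | succ i ih =>
      intro hi
      obtain ⟨h1, h2⟩ := ih (by omega)
      have e : N - (i + 1) + 1 = N - i := by omega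
      have hr := hrec (N - (i + 1)) (by omega)
      have hb : 0 < β (N - (i + 1)) := lt_of_lt_of_le hCm (hβ _ (by omega)).1
      rw [e] at hr
      obtain ⟨h3, h4⟩ := aux_root _ _ hb h1
      rw [← hr] at h3 h4
      refine ⟨h3, le_trans ?_ h2⟩
      nlinarith [mul_nonneg hb.le (sq_nonneg (g (N - (i + 1))))]
  have hbd' : ∀ i, i ≤ N → 0 < g i ∧
      g i ≤ min (1 / Cp) (Real.exp (-(m / a) - 1)) := by
    intro i hi
    have := hbd (N - i) (by omega)
    rwa [Nat.sub_sub_self hi] at this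
  have hstep : ∀ i, i < N → β i * g i ^ n * |Real.log (g i)| ^ m
      + 2 / a * (g i ^ (n - 1) * |Real.log (g i)| ^ m)
      ≤ 2 / a * (g (i + 1) ^ (n - 1) * |Real.log (g (i + 1))| ^ m) := by
    intro i hi
    have hb : 0 < β i := lt_of_lt_of_le hCm (hβ i hi).1
    obtain ⟨h1, h2⟩ := hbd' (i + 1) hi
    obtain ⟨h3, h3'⟩ := hbd' i hi.le
    obtain ⟨_, h4⟩ := aux_root _ _ hb h1
    rw [← hrec i hi] at h4
    have hbx : β i * g i ≤ 1 := by
      have := le_trans h3' (min_le_left _ _)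
      rw [le_div_iff₀ hCp] at this
      nlinarith [mul_le_mul_of_nonneg_right (hβ i hi).2 h3.le]
    have := aux_step a m (β i) (g i) ha hm h3 hb hbx
      (by rw [← h4]; exact le_trans h2 (min_le_right _ _))
    rw [← h4] at this
    have e1 : 2 * a = n - 1 := by rw [ha_def]; ring
    rw [e1, sub_add_cancel] at this
    exact this
  rw [mul_assoc]
  induction k, hjk using Nat.le_induction with
  | base =>
    rw [Finset.Icc_self, Finset.sum_singleton]
    have := hstep j hkN
    have hp := (hbd' j hkN.le).1
    have : 0 ≤ 2 / a * (g j ^ (n - 1) * |Real.log (g j)| ^ m) := by positivity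
    linarith
  | succ k hk ih =>
    rw [Finset.sum_Icc_succ_top (by omega)]
    have h1 := ih (by omega)
    have h2 := hstep (k + 1) hkN
    linarith
end
end

section
/- For every γ > 0 there exists g₀ > 0, depending only on γ, C₋, C₊, such that if 0 < g_f ≤ g₀ then for all 0 ≤ ℓ ≤ k ≤ N, (1/2)·(ḡ_k/ḡ_ℓ)^γ ≤ ∏_{i=ℓ}^{k−1} (1 + γ·β_i·ḡ_i) ≤ (3/2)·(ḡ_k/ḡ_ℓ)^γ (with the empty product for ℓ = k equal to 1). -/
noncomputable section

lemma aux_log {y : ℝ} (hy : 0 ≤ y) : y - y ^ 2 ≤ Real.log (1 + y) := by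
  have h := Real.one_sub_inv_le_log_of_pos (show 0 < 1 + y by linarith)
  have h2 : y - y ^ 2 ≤ 1 - (1 + y)⁻¹ := by
    have h3 : (1 + y)⁻¹ * (1 + y) = 1 := inv_mul_cancel₀ (by linarith)
    have h4 : 0 < (1 + y)⁻¹ := by positivity
    have h5 : 1 - (1 + y)⁻¹ - (y - y ^ 2) = (1 + y)⁻¹ * y ^ 3 := by
      field_simp
      ring
    have : 0 ≤ (1 + y)⁻¹ * y ^ 3 := by positivity
    linarith
  linarith

lemma aux_log' {y : ℝ} (hy : 0 ≤ y) : Real.log (1 + y) ≤ y := by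
  have h := Real.log_le_sub_one_of_pos (show 0 < 1 + y by linarith)
  linarith

lemma aux_step_s4 {γ x : ℝ} (hγ : 0 < γ) (hx : 0 ≤ x) :
    Real.exp (-((γ + γ ^ 2) * x ^ 2)) * (1 + x) ^ γ ≤ 1 + γ * x ∧
    1 + γ * x ≤ Real.exp ((γ + γ ^ 2) * x ^ 2) * (1 + x) ^ γ := by
  have h1 := aux_log hx
  have h2 := aux_log' hx
  have hgx : 0 ≤ γ * x := by positivity
  have h3 := aux_log hgx
  have h4 := aux_log' hgx
  have e : 1 + γ * x = Real.exp (Real.log (1 + γ * x)) :=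
    (Real.exp_log (by linarith)).symm
  rw [Real.rpow_def_of_pos (by linarith), ← Real.exp_add, ← Real.exp_add]
  have h5 := mul_le_mul_of_nonneg_left h1 hγ.le
  have h6 := mul_le_mul_of_nonneg_left h2 hγ.le
  have h7 : 0 ≤ γ * x ^ 2 := by positivity
  have h8 : 0 ≤ γ ^ 2 * x ^ 2 := by positivity
  constructor
  · rw [e, Real.exp_le_exp]
    nlinarith
  · rw [e, Real.exp_le_exp]
    nlinarith

lemma flow_pos {b t : ℝ} (hb : 0 < b) (ht : 0 < t) :
    0 < (-1 + Real.sqrt (1 + 4 * b * t)) / (2 * b) ∧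
    t = (-1 + Real.sqrt (1 + 4 * b * t)) / (2 * b) *
      (1 + b * ((-1 + Real.sqrt (1 + 4 * b * t)) / (2 * b))) := by
  have hbt : 0 < b * t := by positivity
  have hs : 1 < Real.sqrt (1 + 4 * b * t) := by
    rw [Real.lt_sqrt (by norm_num)]
    nlinarith
  have hq : Real.sqrt (1 + 4 * b * t) ^ 2 = 1 + 4 * b * t := Real.sq_sqrt (by nlinarith)
  constructor
  · apply div_pos <;> linarith
  · generalize Real.sqrt (1 + 4 * b * t) = s at *
    field_simp
    nlinarith

theorem stmt_4 (Cm Cp : ℝ) (hCm : 0 < Cm) (hCmCp : Cm ≤ Cp) (γ : ℝ) (hγ : 0 < γ) :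
    ∃ g0 : ℝ, 0 < g0 ∧
      ∀ (N : ℕ), 1 ≤ N → ∀ β : ℕ → ℝ, (∀ k, k < N → Cm ≤ β k ∧ β k ≤ Cp) →
      ∀ gf : ℝ, 0 < gf → gf ≤ g0 →
      ∀ g : ℕ → ℝ, QuadFlow β N gf g →
      ∀ l k : ℕ, l ≤ k → k ≤ N →
        (1 / 2) * (g k / g l) ^ γ ≤ ∏ i ∈ Finset.Ico l k, (1 + γ * β i * g i) ∧
        ∏ i ∈ Finset.Ico l k, (1 + γ * β i * g i) ≤ (3 / 2) * (g k / g l) ^ γ := by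
  have hCp : 0 < Cp := by linarith
  obtain ⟨A, hA⟩ : ∃ A, A = (γ + γ ^ 2) * Cp := ⟨_, rfl⟩
  have hA0 : 0 < A := by rw [hA]; positivity
  refine ⟨1 / (4 * A), by positivity, ?_⟩
  intro N _ β hβ gf hgf hgf0 g ⟨hgN, hg⟩
  have hpos : ∀ k, k ≤ N → 0 < g k := by
    intro k hk
    induction hk using Nat.decreasingInduction with
    | self => rw [hgN]; exact hgf
    | of_succ k hk ih =>
      rw [hg k hk]
      exact (flow_pos (by linarith [(hβ k hk).1]) ih).1
  have hrec : ∀ k, k < N → g (k + 1) = g k * (1 + β k * g k) := by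
    intro k hk
    have := (flow_pos (b := β k) (by linarith [(hβ k hk).1]) (hpos (k + 1) hk)).2
    rwa [← hg k hk] at this
  have hle : ∀ k, k ≤ N → g k ≤ gf := by
    intro k hk
    induction hk using Nat.decreasingInduction with
    | self => exact hgN.le
    | of_succ k hk ih =>
      have h1 := hrec k hk
      have h2 := hpos k hk.le
      have h3 : 0 < β k := by linarith [(hβ k hk).1]
      have h4 : 0 < g k * (β k * g k) := by positivity
      nlinarith
  have key : ∀ l k : ℕ, l ≤ k → k ≤ N →
      Real.exp (-(A * (g k - g l))) * (g k / g l) ^ γ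
        ≤ ∏ i ∈ Finset.Ico l k, (1 + γ * β i * g i) ∧
      ∏ i ∈ Finset.Ico l k, (1 + γ * β i * g i)
        ≤ Real.exp (A * (g k - g l)) * (g k / g l) ^ γ := by
    intro l k hlk
    induction k, hlk using Nat.le_induction with
    | base =>
      intro hl
      have := hpos l hl
      simp [div_self this.ne']
    | succ k hlk ih =>
      intro hk
      have hk' : k < N := hk
      obtain ⟨i1, i2⟩ := ih hk'.le
      have hgk := hpos k hk'.le
      have hgl := hpos l (hlk.trans hk'.le)
      have hb : 0 < β k := by linarith [(hβ k hk').1]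
      have hx : 0 ≤ β k * g k := by positivity
      obtain ⟨s1, s2⟩ := aux_step_s4 hγ hx
      have hr := hrec k hk'
      have hsq : (γ + γ ^ 2) * (β k * g k) ^ 2 ≤ A * (g (k + 1) - g k) := by
        have : (β k * g k) ^ 2 ≤ Cp * (g (k + 1) - g k) := by
          have e : g (k + 1) - g k = β k * g k ^ 2 := by rw [hr]; ring
          rw [e]
          have := mul_le_mul_of_nonneg_right (hβ k hk').2
            (show 0 ≤ β k * g k ^ 2 by positivity)
          nlinarith
        rw [hA, mul_assoc]
        exact mul_le_mul_of_nonneg_left this (by positivity)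
      have hratio : (g (k + 1) / g l) ^ γ = (g k / g l) ^ γ * (1 + β k * g k) ^ γ := by
        rw [← Real.mul_rpow (by positivity) (by positivity), hr]
        congr 1
        ring
      have hp : 0 ≤ (1 + β k * g k) ^ γ := by positivity
      have hassoc : 1 + γ * β k * g k = 1 + γ * (β k * g k) := by ring
      rw [Finset.prod_Ico_succ_top hlk, hratio, hassoc]
      have t1 : Real.exp (-(A * (g (k + 1) - g k))) * (1 + β k * g k) ^ γ
          ≤ 1 + γ * (β k * g k) :=
        le_trans (mul_le_mul_of_nonneg_right
          (Real.exp_le_exp.mpr (neg_le_neg hsq)) hp) s1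
      have t2 : 1 + γ * (β k * g k)
          ≤ Real.exp (A * (g (k + 1) - g k)) * (1 + β k * g k) ^ γ :=
        le_trans s2 (mul_le_mul_of_nonneg_right (Real.exp_le_exp.mpr hsq) hp)
      have e1 : -(A * (g (k + 1) - g l)) = -(A * (g k - g l)) + -(A * (g (k + 1) - g k)) := by
        ring
      have e2 : A * (g (k + 1) - g l) = A * (g k - g l) + A * (g (k + 1) - g k) := by
        ring
      have hP : 0 ≤ ∏ i ∈ Finset.Ico l k, (1 + γ * β i * g i) :=
        le_trans (by positivity) i1
      constructor
      · rw [e1, Real.exp_add, mul_mul_mul_comm]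
        exact mul_le_mul i1 t1 (by positivity) hP
      · rw [e2, Real.exp_add, mul_mul_mul_comm]
        exact mul_le_mul i2 t2 (by positivity) (by positivity)
  intro l k hlk hk
  obtain ⟨k1, k2⟩ := key l k hlk hk
  have hgk := hpos k hk
  have hgl := hpos l (hlk.trans hk)
  have hd : A * (g k - g l) ≤ 1 / 4 := by
    have h1 : g k - g l ≤ 1 / (4 * A) := by linarith [hle k hk]
    calc A * (g k - g l) ≤ A * (1 / (4 * A)) := mul_le_mul_of_nonneg_left h1 hA0.le
      _ = 1 / 4 := by field_simp
  have hR : 0 ≤ (g k / g l) ^ γ := by positivity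
  have hlow : 3 / 4 ≤ Real.exp (-(1 / 4 : ℝ)) := by
    have := Real.add_one_le_exp (-(1 / 4 : ℝ))
    linarith
  have hup : Real.exp (1 / 4 : ℝ) ≤ 3 / 2 := by
    have h : Real.exp (1 / 4 : ℝ) * Real.exp (-(1 / 4 : ℝ)) = 1 := by
      rw [← Real.exp_add]; simp
    nlinarith [Real.exp_pos (1 / 4 : ℝ)]
  constructor
  · refine le_trans (mul_le_mul_of_nonneg_right ?_ hR) k1
    have := Real.exp_le_exp.mpr (neg_le_neg hd)
    linarith
  · refine le_trans k2 (mul_le_mul_of_nonneg_right ?_ hR)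
    have := Real.exp_le_exp.mpr hd
    linarith
end
end

section
/- If α₀, α₁ ∈ M₂(ℂ) satisfy S⁻¹ α_μ S = Σ_ν R_{μν} α_ν for μ = 0, 1, for every R ∈ 𝒢 and every invertible S ∈ M₂(ℂ) implementing R, then there is c ∈ ℂ with α₀ = c·γ₀ and α₁ = c·γ₁. -/
noncomputable section

open scoped Matrix

/-- `R` is a 2×2 signed permutation matrix (an element of the symmetry group of the square). -/
def IsSignedPerm (R : Matrix (Fin 2) (Fin 2) ℝ) : Prop :=
  ∃ σ : Equiv.Perm (Fin 2), ∃ ε : Fin 2 → ℝ, (∀ i, ε i = 1 ∨ ε i = -1) ∧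
    ∀ i j, R i j = if j = σ i then ε i else 0

/-- `S` (with two-sided inverse `T`) implements the lattice symmetry `R` on the gamma
matrices: `S⁻¹ γ_μ S = Σ_ν R_{μν} γ_ν`. -/
def Implements (γ : Fin 2 → Matrix (Fin 2) (Fin 2) ℂ) (R : Matrix (Fin 2) (Fin 2) ℝ)
    (S T : Matrix (Fin 2) (Fin 2) ℂ) : Prop :=
  S * T = 1 ∧ T * S = 1 ∧ ∀ μ, T * γ μ * S = ∑ ν, ((R μ ν : ℝ) : ℂ) • γ ν

theorem schur_aux (A B X : Matrix (Fin 2) (Fin 2) ℂ) (hA : A * A = 1) (hB : B * B = 1)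
    (hAB : A * B = - (B * A)) (hXA : X * A = A * X) (hXB : X * B = B * X) :
    ∃ c : ℂ, X = c • (1 : Matrix (Fin 2) (Fin 2) ℂ) := by
  have trA : A.trace = 0 := by
    have h1 : B * A * B = - A := by
      have : B * A = - (A * B) := by rw [hAB, neg_neg]
      rw [this, neg_mul, mul_assoc, hB, mul_one]
    have h2 : (B * A * B).trace = A.trace := by
      rw [Matrix.trace_mul_comm, ← mul_assoc, hB, one_mul]
    rw [h1, Matrix.trace_neg] at h2
    linear_combination (-1 / 2 : ℂ) * h2
  set t : ℂ := X.trace / 2 with ht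
  -- the traceless part of X is a multiple of A
  obtain ⟨s, hs⟩ : ∃ s : ℂ, (X - t • (1 : Matrix (Fin 2) (Fin 2) ℂ)) * A = s • 1 := by
    refine ⟨(X * A).trace / 2, ?_⟩
    have e := fun i j => congrFun (congrFun hXA i) j
    have e00 := e 0 0
    have e01 := e 0 1
    have e10 := e 1 0
    simp only [Matrix.trace_fin_two, Matrix.mul_apply, Fin.sum_univ_two] at *
    have hd : A 1 1 = - A 0 0 := by linear_combination trA
    rw [hd] at e01 e10
    ext i j
    fin_cases i <;> fin_cases j <;>
      simp [Matrix.mul_apply, Fin.sum_univ_two, hd, ht, sub_mul] <;> grind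
  refine ⟨t, ?_⟩
  have hX : X - t • (1 : Matrix (Fin 2) (Fin 2) ℂ) = s • A := by
    calc _ = (X - t • (1 : Matrix (Fin 2) (Fin 2) ℂ)) * A * A := by
            rw [mul_assoc, hA, mul_one]
      _ = _ := by rw [hs]; simp
  have hc : (s • A) * B = B * (s • A) := by
    rw [← hX]; simp [sub_mul, mul_sub, hXB]
  have h3 : (s • A) * B = 0 := by
    have : (s • A) * B = - ((s • A) * B) := by
      conv_lhs => rw [hc]
      simp [hAB]
    have h2 : (2 : ℂ) • ((s • A) * B) = 0 := by
      rw [two_smul]; exact eq_neg_iff_add_eq_zero.mp this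
    exact (smul_eq_zero.mp h2).resolve_left two_ne_zero
  have h4 : s • A = 0 := by
    calc s • A = (s • A) * B * B := by rw [mul_assoc, hB, mul_one]
      _ = 0 := by rw [h3, zero_mul]
  rw [h4] at hX
  exact sub_eq_zero.mp hX

theorem stmt_18 (γ : Fin 2 → Matrix (Fin 2) (Fin 2) ℂ)
    (hsa : ∀ μ, (γ μ)ᴴ = γ μ)
    (hcl : ∀ μ ν, γ μ * γ ν + γ ν * γ μ =
      if μ = ν then (2 : ℂ) • (1 : Matrix (Fin 2) (Fin 2) ℂ) else 0)
    (α : Fin 2 → Matrix (Fin 2) (Fin 2) ℂ)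
    (hα : ∀ R S T, IsSignedPerm R → Implements γ R S T →
      ∀ μ, T * α μ * S = ∑ ν, ((R μ ν : ℝ) : ℂ) • α ν) :
    ∃ c : ℂ, ∀ μ, α μ = c • γ μ := by
  have sq : ∀ μ, γ μ * γ μ = 1 := by
    intro μ
    have h := hcl μ μ
    rw [if_pos rfl, ← two_smul ℂ] at h
    exact smul_right_injective _ (two_ne_zero) h
  have hA := sq 0
  have hB := sq 1
  have hAB : γ 0 * γ 1 = - (γ 1 * γ 0) := by
    have h := hcl 0 1
    rw [if_neg (by decide)] at h
    exact eq_neg_of_add_eq_zero_left h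
  have hBA : γ 1 * γ 0 = - (γ 0 * γ 1) := by rw [hAB, neg_neg]
  -- reflections
  have r0 : γ 0 * α 0 * γ 0 = α 0 := by
    have h := hα !![1, 0; 0, -1] (γ 0) (γ 0)
      ⟨1, ![1, -1], by intro i; fin_cases i <;> simp, by
        intro i j; fin_cases i <;> fin_cases j <;> simp⟩
      ⟨hA, hA, by
        intro μ
        fin_cases μ
        · simp [hA]
        · simp [hAB, mul_assoc, hA]⟩ 0
    simpa using h
  have r1 : γ 1 * α 0 * γ 1 = - α 0 := by
    have h := hα !![-1, 0; 0, 1] (γ 1) (γ 1)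
      ⟨1, ![-1, 1], by intro i; fin_cases i <;> simp, by
        intro i j; fin_cases i <;> fin_cases j <;> simp⟩
      ⟨hB, hB, by
        intro μ
        fin_cases μ
        · simp [hBA, mul_assoc, hB]
        · simp [hB]⟩ 0
    simpa using h
  -- rotation by a quarter turn
  set g := γ 0 * γ 1 with hg
  have gg : g * g = -1 := by
    calc g * g = γ 0 * (γ 1 * γ 0) * γ 1 := by rw [hg]; simp only [mul_assoc]
      _ = - (γ 0 * γ 0 * (γ 1 * γ 1)) := by rw [hBA, hg]; simp only [mul_assoc, mul_neg, neg_mul]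
      _ = -1 := by rw [hA, hB, one_mul]
  have g0 : γ 0 * g = γ 1 := by rw [hg, ← mul_assoc, hA, one_mul]
  have g0' : g * γ 0 = - γ 1 := by rw [hg, mul_assoc, hBA, mul_neg, g0]
  have g1' : g * γ 1 = γ 0 := by rw [hg, mul_assoc, hB, mul_one]
  have g1 : γ 1 * g = - γ 0 := by rw [hg, ← mul_assoc, hBA, neg_mul, g1']
  have m1 : (1 + g) * (1 - g) = (2 : ℂ) • 1 := by
    have : (1 + g) * (1 - g) = 1 - g * g := by noncomm_ring
    rw [this, gg, two_smul]; abel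
  have m2 : (1 - g) * (1 + g) = (2 : ℂ) • 1 := by
    have : (1 - g) * (1 + g) = 1 - g * g := by noncomm_ring
    rw [this, gg, two_smul]; abel
  have k0 : (1 - g) * γ 0 * (1 + g) = (2 : ℂ) • γ 1 := by
    rw [sub_mul, one_mul, g0', sub_neg_eq_add, mul_add, mul_one, add_mul, g0, g1, two_smul]; abel
  have k1 : (1 - g) * γ 1 * (1 + g) = (2 : ℂ) • (- γ 0) := by
    rw [sub_mul, one_mul, g1', mul_add, mul_one, sub_mul, g0, g1, two_smul]; abel
  have imp : Implements γ !![0, 1; -1, 0] (1 + g) ((1 / 2 : ℂ) • (1 - g)) := by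
    refine ⟨?_, ?_, ?_⟩
    · rw [mul_smul_comm, m1, smul_smul]; norm_num
    · rw [smul_mul_assoc, m2, smul_smul]; norm_num
    · intro μ
      rw [smul_mul_assoc, smul_mul_assoc]
      fin_cases μ
      · simp [k0]
      · simp [k1]
  have rot := hα !![0, 1; -1, 0] (1 + g) ((1 / 2 : ℂ) • (1 - g))
      ⟨Equiv.swap 0 1, ![1, -1], by intro i; fin_cases i <;> simp, by
        intro i j; fin_cases i <;> fin_cases j <;> simp⟩ imp 0
  have imp0 := imp.2.2 0
  simp only [Fin.sum_univ_two] at rot imp0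
  have c0 : α 0 * γ 0 = γ 0 * α 0 := by
    conv_lhs => rw [← r0]
    rw [mul_assoc, hA, mul_one]
  have c1 : α 0 * γ 1 = - (γ 1 * α 0) := by
    have : - α 0 * γ 1 = γ 1 * α 0 := by rw [← r1, mul_assoc, hB, mul_one]
    rw [← this, neg_mul, neg_neg]
  obtain ⟨c, hc⟩ := schur_aux (γ 0) (γ 1) (α 0 * γ 0) hA hB (by rw [← hg, hBA, neg_neg])
    (by rw [c0, mul_assoc, c0]) (by
      rw [mul_assoc, ← hg, hAB, mul_neg, ← mul_assoc, c1, neg_mul, neg_neg, mul_assoc])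
  have e0 : α 0 = c • γ 0 := by
    calc α 0 = α 0 * γ 0 * γ 0 := by rw [mul_assoc, hA, mul_one]
      _ = _ := by rw [hc]; simp
  have e1 : α 1 = c • γ 1 := by
    have h : ((1 / 2 : ℂ) • (1 - g)) * α 0 * (1 + g) = α 1 := by simpa using rot
    have h' : ((1 / 2 : ℂ) • (1 - g)) * γ 0 * (1 + g) = γ 1 := by simpa using imp0
    rw [← h, e0, mul_smul_comm, smul_mul_assoc, h']
  refine ⟨c, ?_⟩
  intro μ
  fin_cases μ
  · exact e0
  · exact e1
end
end

section
/- If A ∈ M₄(ℂ), identified with M₂(ℂ) ⊗ M₂(ℂ) via the Kronecker product, satisfies (S⊗S)⁻¹ A (S⊗S) = A for every R ∈ 𝒢 and every invertible S ∈ M₂(ℂ) implementing R, then there exist c, c_p, c_v ∈ ℂ with A = c·(I⊗I) + c_p·(γ₅⊗γ₅) + c_v·(γ₀⊗γ₀ + γ₁⊗γ₁). -/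
noncomputable section

open scoped Matrix
open Kronecker

abbrev M2 := Matrix (Fin 2) (Fin 2) ℂ
abbrev M4 := Matrix (Fin 2 × Fin 2) (Fin 2 × Fin 2) ℂ

/-- The four products of gamma matrices. -/
def gens (x y : M2) : Fin 4 → M2 := ![1, x, y, x * y]

lemma gens_span (x y : M2) (hx : x * x = 1) (hy : y * y = 1) (hyx : y * x = -(x * y)) :
    Submodule.span ℂ (Set.range (gens x y)) = ⊤ := by
  have hx' : ∀ z, x * (x * z) = z := fun z => by rw [← mul_assoc, hx, one_mul]
  have hy' : ∀ z, y * (y * z) = z := fun z => by rw [← mul_assoc, hy, one_mul]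
  have hyx' : ∀ z, y * (x * z) = -(x * (y * z)) := fun z => by
    rw [← mul_assoc, hyx, neg_mul, mul_assoc]
  have hli : LinearIndependent ℂ (gens x y) := by
    rw [Fintype.linearIndependent_iff]
    intro g hg
    have h0 : g 0 • (1 : M2) + g 1 • x + g 2 • y + g 3 • (x * y) = 0 := by
      simpa [gens, Fin.sum_univ_four] using hg
    have h1 : g 0 • (1 : M2) + g 1 • x - g 2 • y - g 3 • (x * y) = 0 := by
      have := congrArg (fun z => x * z * x) h0
      simp [mul_add, add_mul, mul_assoc, hx, hyx, hx'] at this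
      rw [← this]; abel
    have h2 : g 0 • (1 : M2) - g 1 • x + g 2 • y - g 3 • (x * y) = 0 := by
      have := congrArg (fun z => y * z * y) h0
      simp [mul_add, add_mul, mul_assoc, hy, hyx, hy', hyx'] at this
      rw [← this]; abel
    have h3 : g 0 • (1 : M2) - g 1 • x - g 2 • y + g 3 • (x * y) = 0 := by
      have := congrArg (fun z => y * z * y) h1
      simp [mul_sub, sub_mul, mul_add, add_mul, mul_assoc, hy, hyx, hy', hyx'] at this
      rw [← this]; abel
    have k0 : g 0 • (1 : M2) = 0 := by
      linear_combination (norm := module) (1/4 : ℂ) • h0 + (1/4 : ℂ) • h1 + (1/4 : ℂ) • h2 + (1/4 : ℂ) • h3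
    have k1 : g 1 • x = 0 := by
      linear_combination (norm := module) (1/4 : ℂ) • h0 + (1/4 : ℂ) • h1 - (1/4 : ℂ) • h2 - (1/4 : ℂ) • h3
    have k2 : g 2 • y = 0 := by
      linear_combination (norm := module) (1/4 : ℂ) • h0 - (1/4 : ℂ) • h1 + (1/4 : ℂ) • h2 - (1/4 : ℂ) • h3
    have k3 : g 3 • (x * y) = 0 := by
      linear_combination (norm := module) (1/4 : ℂ) • h0 - (1/4 : ℂ) • h1 - (1/4 : ℂ) • h2 + (1/4 : ℂ) • h3
    have key : ∀ (c : ℂ) (z w : M2), z * w = 1 → c • z = 0 → c = 0 := by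
      intro c z w hzw h
      have := congrArg (fun t => (t * w) 0 0) h
      simpa [hzw] using this
    intro i
    fin_cases i
    · exact key _ 1 1 (by simp) k0
    · exact key _ x x hx k1
    · exact key _ y y hy k2
    · exact key _ (x * y) (y * x) (by simp [mul_assoc, hy', hx]) k3
  apply hli.span_eq_top_of_card_eq_finrank'
  simp [Module.finrank_matrix]

/-- Conjugation by `S ⊗ S`, as a linear map. -/
def cj (T S : M2) : M4 →ₗ[ℂ] M4 :=
  (LinearMap.mulRight ℂ (S ⊗ₖ S)) ∘ₗ (LinearMap.mulLeft ℂ (T ⊗ₖ T))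

lemma cj_apply (T S : M2) (A : M4) : cj T S A = (T ⊗ₖ T) * A * (S ⊗ₖ S) := rfl

lemma cj_kron (T S X Y : M2) : cj T S (X ⊗ₖ Y) = (T * X * S) ⊗ₖ (T * Y * S) := by
  rw [cj_apply, Matrix.mul_kronecker_mul, Matrix.mul_kronecker_mul]

lemma mem_of_gens (x y : M2) (hx : x * x = 1) (hy : y * y = 1) (hyx : y * x = -(x * y))
    (Q : M4 →ₗ[ℂ] M4) (W : Submodule ℂ M4)
    (h : ∀ i j, Q (gens x y i ⊗ₖ gens x y j) ∈ W) (A : M4) : Q A ∈ W := by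
  have hs := gens_span x y hx hy hyx
  have step : ∀ i (Y : M2), Q (gens x y i ⊗ₖ Y) ∈ W := by
    intro i Y
    have hY : Y ∈ Submodule.span ℂ (Set.range (gens x y)) := by rw [hs]; trivial
    induction hY using Submodule.span_induction with
    | mem z hz => obtain ⟨j, rfl⟩ := hz; exact h i j
    | zero => simp
    | add a b _ _ ha hb => rw [Matrix.kronecker_add, map_add]; exact W.add_mem ha hb
    | smul c a _ ha => rw [Matrix.kronecker_smul, map_smul]; exact W.smul_mem _ ha
  have step2 : ∀ (X Y : M2), Q (X ⊗ₖ Y) ∈ W := by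
    intro X Y
    have hX : X ∈ Submodule.span ℂ (Set.range (gens x y)) := by rw [hs]; trivial
    induction hX using Submodule.span_induction with
    | mem z hz => obtain ⟨j, rfl⟩ := hz; exact step j Y
    | zero => simp
    | add a b _ _ ha hb => rw [Matrix.add_kronecker, map_add]; exact W.add_mem ha hb
    | smul c a _ ha => rw [Matrix.smul_kronecker, map_smul]; exact W.smul_mem _ ha
  rw [Matrix.matrix_eq_sum_single A, map_sum]
  refine W.sum_mem fun p _ => ?_
  rw [map_sum]
  refine W.sum_mem fun q _ => ?_
  have : Matrix.single p q (A p q) =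
      (Matrix.single p.1 q.1 (A p q) : M2) ⊗ₖ (Matrix.single p.2 q.2 1 : M2) := by
    rw [Matrix.single_kronecker_single, mul_one]
  rw [this]
  exact step2 _ _

theorem stmt_19 (γ : Fin 2 → Matrix (Fin 2) (Fin 2) ℂ)
    (hsa : ∀ μ, (γ μ)ᴴ = γ μ)
    (hcl : ∀ μ ν, γ μ * γ ν + γ ν * γ μ =
      if μ = ν then (2 : ℂ) • (1 : Matrix (Fin 2) (Fin 2) ℂ) else 0)
    (A : Matrix (Fin 2 × Fin 2) (Fin 2 × Fin 2) ℂ)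
    (hA : ∀ R S T, IsSignedPerm R → Implements γ R S T →
      (T ⊗ₖ T) * A * (S ⊗ₖ S) = A) :
    ∃ c cp cv : ℂ,
      A = c • ((1 : Matrix (Fin 2) (Fin 2) ℂ) ⊗ₖ (1 : Matrix (Fin 2) (Fin 2) ℂ)) +
        cp • ((Complex.I • (γ 0 * γ 1)) ⊗ₖ (Complex.I • (γ 0 * γ 1))) +
        cv • (γ 0 ⊗ₖ γ 0 + γ 1 ⊗ₖ γ 1) := by
  obtain ⟨x, hxd⟩ : ∃ x, x = γ 0 := ⟨_, rfl⟩
  obtain ⟨y, hyd⟩ : ∃ y, y = γ 1 := ⟨_, rfl⟩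
  have hx : x * x = 1 := by
    have := hcl 0 0
    simp only [if_true, ← hxd, ← two_smul ℂ (x * x)] at this
    exact smul_right_injective _ (two_ne_zero' ℂ) this
  have hy : y * y = 1 := by
    have := hcl 1 1
    simp only [if_true, ← hyd, ← two_smul ℂ (y * y)] at this
    exact smul_right_injective _ (two_ne_zero' ℂ) this
  have hyx : y * x = -(x * y) := by
    have := hcl 1 0
    simp only [← hxd, ← hyd] at this
    exact eq_neg_of_add_eq_zero_left (by simpa using this)
  have hx' : ∀ z, x * (x * z) = z := fun z => by rw [← mul_assoc, hx, one_mul]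
  have hy' : ∀ z, y * (y * z) = z := fun z => by rw [← mul_assoc, hy, one_mul]
  have hyx' : ∀ z, y * (x * z) = -(x * (y * z)) := fun z => by
    rw [← mul_assoc, hyx, neg_mul, mul_assoc]
  -- implementers
  have imp : ∀ (e : Fin 2 → ℝ) (σ : Equiv.Perm (Fin 2)) (S T : M2), (∀ i, e i = 1 ∨ e i = -1) →
      S * T = 1 → T * S = 1 → (∀ μ, T * γ μ * S = (e μ : ℂ) • γ (σ μ)) → cj T S A = A := by
    intro e σ S T he h1 h2 h3
    refine hA (Matrix.of fun i j => if j = σ i then e i else 0) S T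
      ⟨σ, e, he, fun i j => rfl⟩ ⟨h1, h2, fun μ => ?_⟩
    rw [h3, Finset.sum_eq_single (σ μ)]
    · simp
    · intro b _ hb; simp [hb]
    · simp
  have Ax : cj x x A = A := by
    refine imp ![1, -1] 1 x x (by simp [Fin.forall_fin_two]) hx hx ?_
    simp [Fin.forall_fin_two, ← hxd, ← hyd, mul_assoc, hx, hyx, hx']
  have Ay : cj y y A = A := by
    refine imp ![-1, 1] 1 y y (by simp [Fin.forall_fin_two]) hy hy ?_
    simp [Fin.forall_fin_two, ← hxd, ← hyd, mul_assoc, hx, hy, hyx, hx', hy', hyx']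
  have Az : cj (y * x) (x * y) A = A := by
    refine imp ![-1, -1] 1 (x * y) (y * x) (by simp [Fin.forall_fin_two]) ?_ ?_ ?_ <;>
    simp [Fin.forall_fin_two, ← hxd, ← hyd, mul_assoc, hx, hy, hyx, hx', hy', hyx']
  obtain ⟨S, hS⟩ : ∃ S : M2, S = 1 + x * y := ⟨_, rfl⟩
  obtain ⟨T, hT⟩ : ∃ T : M2, T = (1/2 : ℂ) • (1 - x * y) := ⟨_, rfl⟩
  have hTS : T * S = 1 := by
    rw [hS, hT]
    simp [mul_add, sub_mul, mul_assoc, hx, hy, hyx, hx', hy', hyx']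
    module
  have hST : S * T = 1 := by
    rw [hS, hT]
    simp [mul_sub, add_mul, mul_assoc, hx, hy, hyx, hx', hy', hyx']
    module
  have hTx : T * x * S = y := by
    rw [hS, hT]
    simp [mul_add, sub_mul, add_mul, mul_assoc, hx, hy, hyx, hx', hy', hyx']
    module
  have hTy : T * y * S = -x := by
    rw [hS, hT]
    simp [mul_add, sub_mul, add_mul, mul_assoc, hx, hy, hyx, hx', hy', hyx']
    module
  have hTxy : T * (x * y) * S = x * y := by
    rw [hS, hT]
    simp [mul_add, sub_mul, add_mul, mul_assoc, hx, hy, hyx, hx', hy', hyx']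
    module
  have Ar : cj T S A = A := by
    refine imp ![1, -1] (Equiv.swap 0 1) S T (by simp [Fin.forall_fin_two]) hST hTS ?_
    simp [Fin.forall_fin_two, ← hxd, ← hyd, hTx, hTy]
  let D : M4 →ₗ[ℂ] M4 := LinearMap.id + cj x x + cj y y + cj (y * x) (x * y)
  let Q : M4 →ₗ[ℂ] M4 := D + cj T S ∘ₗ D
  have hD : D A = (4 : ℂ) • A := by
    simp only [D, LinearMap.add_apply, LinearMap.id_apply, Ax, Ay, Az]; module
  have hQ : Q A = (8 : ℂ) • A := by
    simp only [Q, LinearMap.add_apply, LinearMap.comp_apply, hD, map_smul, Ar]; module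
  let W : Submodule ℂ M4 := Submodule.span ℂ
    {(1 : M2) ⊗ₖ (1 : M2), (Complex.I • (x * y)) ⊗ₖ (Complex.I • (x * y)), x ⊗ₖ x + y ⊗ₖ y}
  have neg_k : ∀ X Y : M2, (-X) ⊗ₖ Y = -(X ⊗ₖ Y) := fun X Y => by ext; simp
  have k_neg : ∀ X Y : M2, X ⊗ₖ (-Y) = -(X ⊗ₖ Y) := fun X Y => by ext; simp
  have off : ∀ i j, i ≠ j → D (gens x y i ⊗ₖ gens x y j) = 0 := by
    intro i j hij
    fin_cases i <;> fin_cases j <;>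
    first
    | exact absurd rfl hij
    | (simp only [D, LinearMap.add_apply, LinearMap.id_apply, cj_kron]
       simp [-Matrix.one_kronecker_one, gens, mul_assoc, hx, hy, hyx, hx', hy', hyx', neg_k, k_neg]
       done)
  have dia : ∀ i, D (gens x y i ⊗ₖ gens x y i) = (4 : ℂ) • (gens x y i ⊗ₖ gens x y i) := by
    intro i
    fin_cases i <;>
    (simp only [D, LinearMap.add_apply, LinearMap.id_apply, cj_kron]
     simp [-Matrix.one_kronecker_one, gens, mul_assoc, hx, hy, hyx, hx', hy', hyx', neg_k, k_neg]
     module)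
  have hW : Q A ∈ W := by
    refine mem_of_gens x y hx hy hyx Q W ?_ A
    intro i j
    by_cases hij : i = j
    · subst hij
      simp only [Q, LinearMap.add_apply, LinearMap.comp_apply, dia, map_smul, cj_kron]
      rw [Submodule.mem_span_triple]
      fin_cases i
      · refine ⟨8, 0, 0, ?_⟩
        simp only [gens, Fin.zero_eta, Matrix.cons_val_zero, mul_one, hTS]
        module
      · refine ⟨0, 0, 4, ?_⟩
        simp only [gens, Fin.mk_one, Matrix.cons_val_one, Matrix.cons_val_zero, hTx]
        module
      · refine ⟨0, 0, 4, ?_⟩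
        simp [-Matrix.one_kronecker_one, gens, hTy, neg_k, k_neg]
        module
      · refine ⟨0, -8, 0, ?_⟩
        simp [-Matrix.one_kronecker_one, gens, hTxy, Matrix.smul_kronecker, Matrix.kronecker_smul, smul_smul]
        module
    · simp [Q, off i j hij]
  rw [hQ] at hW
  have hAW : A ∈ W := by
    have := W.smul_mem (1/8 : ℂ) hW
    rwa [smul_smul, show (1/8 : ℂ) * 8 = 1 by norm_num, one_smul] at this
  rw [Submodule.mem_span_triple] at hAW
  obtain ⟨c, cp, cv, h⟩ := hAW
  refine ⟨c, cp, cv, ?_⟩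
  rw [← hxd, ← hyd]
  exact h.symm
end
end
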